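/- For all k ≥ 1, a complete multipartite graph G belongs to D̂_k if and only if there exist integers b ≥ a ≥ 1 and p ≥ 2 with k + 1 = a + (p−1)b such that G is isomorphic to the complete (p+1)-partite graph K_{a,b,…,b} with one colour class of size a and p colour classes of size b, and moreover if p = 2 then a = b. -/

import Mathlib

open SimpleGraph

/-- The degree of a vertex in a finite simple graph. -/
noncomputable def degC {V : Type} [Fintype V] (G : SimpleGraph V) (v : V) : ℕ := by
  classical exact G.degree v

/-- The minimum degree of a finite simple graph. -/
noncomputable def minDegC {V : Type} [Fintype V] (G : SimpleGraph V) : ℕ := by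
  classical exact G.minDegree

/-- `H` is a minor of `G`: there is a family of nonempty, pairwise disjoint,
connected branch sets, one for each vertex of `H`, such that every edge of `H`
is realised by an edge of `G` between the corresponding branch sets. -/
def IsMinorOf {W V : Type} (H : SimpleGraph W) (G : SimpleGraph V) : Prop :=
  ∃ B : W → Set V,
    (∀ w, (B w).Nonempty) ∧
    (∀ u w : W, u ≠ w → Disjoint (B u) (B w)) ∧
    (∀ w, (G.induce (B w)).Connected) ∧
    (∀ ⦃u w : W⦄, H.Adj u w → ∃ a ∈ B u, ∃ b ∈ B w, G.Adj a b)

/-- `H` is a proper minor of `G`: a minor that is not isomorphic to `G`. -/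
def IsProperMinorOf {W V : Type} (H : SimpleGraph W) (G : SimpleGraph V) : Prop :=
  IsMinorOf H G ∧ ¬ Nonempty (H ≃g G)

/-- `G ∈ D_k`: every minor of `G` has minimum degree at most `k`. -/
def MemD (k : ℕ) {V : Type} (G : SimpleGraph V) : Prop :=
  ∀ (W : Type) [Fintype W] (H : SimpleGraph W), IsMinorOf H G → minDegC H ≤ k

/-- `G ∈ D̂_k`: `G ∉ D_k` but every proper minor of `G` is in `D_k`. -/
def MemDHat (k : ℕ) {V : Type} (G : SimpleGraph V) : Prop :=
  ¬ MemD k G ∧ ∀ (W : Type) [Fintype W] (H : SimpleGraph W), IsProperMinorOf H G → MemD k H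

/-- `G` is a complete multipartite graph: its vertices can be coloured so that
two vertices are adjacent iff they have distinct colours. -/
def IsCompleteMultipartiteGraph {V : Type} (G : SimpleGraph V) : Prop :=
  ∃ (ι : Type) (c : V → ι), ∀ u v : V, G.Adj u v ↔ c u ≠ c v

/-!
Write `N` for the number of vertices and `b = N - k - 1`, so that in a complete multipartite graph
a vertex has degree at least `k + 1` exactly when its class has size at most `b`, with equality in
both places together.

If all classes but at most one have size `b`, every edge has an end of degree `k + 1` and hence no
edge can be deleted. A minor of minimum degree at least `k + 1` on fewer vertices is excluded by
counting. Suppose that `r` vertices are deleted or lie in one of the `t` branch sets with at least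
two vertices, so `2t ≤ r`. If `v` is a branch set of its own, in a class `C` of size `b`, then the
degree at `v` shows that at least `r - t ≥ r / 2` of these `r` vertices lie in `C`; the same count
in a class of any size gives `r < 2b`. Hence each class of size `b` either is lost entirely or
contains half of the `r` vertices, which is impossible for three classes unless `r = 0`.

Conversely, minimality under edge deletion forces all classes but at most one to have size `b`.
Contracting the edge `xy` lowers by one the degree of the vertices outside the classes of `x` and
`y`, and leaves the other degrees large enough; so minimality gives a vertex of degree `k + 1` in
a third class.
-/

section Minors

variable {U V W : Type} {K : SimpleGraph U} {G : SimpleGraph V} {H : SimpleGraph W} {k : ℕ}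

/-- The graph `G` has minimum degree greater than `k`. Degrees are cardinalities `Set.ncard`, so
that no instances are needed; a vertex of infinite degree counts as having degree `0`. -/
def MinDegreeGT (k : ℕ) (G : SimpleGraph V) : Prop :=
  Nonempty V ∧ ∀ v, k < (G.neighborSet v).ncard

lemma lt_minDegC_iff_minDegreeGT [Fintype V] : k < minDegC G ↔ MinDegreeGT k G := by
  classical
  have hmin : minDegC G = G.minDegree := by
    unfold minDegC
    congr!
  simp only [hmin, MinDegreeGT, ← Nat.card_coe_set_eq, Nat.card_eq_fintype_card,
    card_neighborSet_eq_degree]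
  refine ⟨fun h => ⟨?_, fun v => h.trans_le (G.minDegree_le_degree v)⟩, fun ⟨_, h⟩ => ?_⟩
  · by_contra! hV
    simp at h
  · obtain ⟨v, hv⟩ := G.exists_minimal_degree_vertex
    exact hv ▸ h v

lemma MinDegreeGT.mono [Finite V] {G' : SimpleGraph V} (h : MinDegreeGT k G') (hle : G' ≤ G) :
    MinDegreeGT k G :=
  ⟨h.1, fun v => (h.2 v).trans_le (Set.ncard_le_ncard fun _ hw => hle hw)⟩

lemma MinDegreeGT.of_iso (h : MinDegreeGT k H) (e : H ≃g G) : MinDegreeGT k G := by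
  refine ⟨h.1.map e, fun v => ?_⟩
  rw [← Nat.card_coe_set_eq, Nat.card_congr (e.symm.mapNeighborSet v), Nat.card_coe_set_eq]
  exact h.2 _

/-- The sets `B w` are the branch sets of a model of `H` as a minor of `G`. -/
structure IsMinorModel (H : SimpleGraph W) (G : SimpleGraph V) (B : W → Set V) : Prop where
  nonempty : ∀ w, (B w).Nonempty
  disjoint : ∀ u w, u ≠ w → Disjoint (B u) (B w)
  connected : ∀ w, (G.induce (B w)).Connected
  exists_adj : ∀ ⦃u w⦄, H.Adj u w → ∃ a ∈ B u, ∃ b ∈ B w, G.Adj a b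

lemma isMinorOf_iff_exists_isMinorModel : IsMinorOf H G ↔ ∃ B, IsMinorModel H G B :=
  ⟨fun ⟨B, hne, hdisj, hconn, hadj⟩ => ⟨B, hne, hdisj, hconn, hadj⟩,
    fun ⟨B, hB⟩ => ⟨B, hB.nonempty, hB.disjoint, hB.connected, hB.exists_adj⟩⟩

namespace IsMinorModel

variable {B : W → Set V}

lemma eq_of_mem (hB : IsMinorModel H G B) {u w : W} {v : V} (hu : v ∈ B u) (hw : v ∈ B w) :
    u = w := by
  by_contra hne
  exact Set.disjoint_left.1 (hB.disjoint u w hne) hu hw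

lemma injective_of_mem (hB : IsMinorModel H G B) {f : W → V} (hf : ∀ w, f w ∈ B w) :
    Function.Injective f :=
  fun u w h => hB.eq_of_mem (hf u) (h ▸ hf w)

lemma connected_induce_biUnion (hB : IsMinorModel H G B) {C : Set W}
    (hC : (H.induce C).Connected) : (G.induce (⋃ w ∈ C, B w)).Connected := by
  have hsub : ∀ w : C, B w ⊆ ⋃ w ∈ C, B w := fun w => Set.subset_biUnion_of_mem w.2
  have hbranch : ∀ (w : C) u v (hu : u ∈ B w) (hv : v ∈ B w),
      (G.induce (⋃ w ∈ C, B w)).Reachable ⟨u, hsub w hu⟩ ⟨v, hsub w hv⟩ := fun w u v hu hv =>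
    ((hB.connected w).preconnected ⟨u, hu⟩ ⟨v, hv⟩).map (induceHomOfLE G (hsub w)).toHom
  obtain ⟨w₀⟩ := hC.nonempty
  obtain ⟨v₀, hv₀⟩ := hB.nonempty w₀
  have hreach : ∀ w : C, ∀ v (hv : v ∈ B w),
      (G.induce (⋃ w ∈ C, B w)).Reachable ⟨v₀, hsub w₀ hv₀⟩ ⟨v, hsub w hv⟩ := by
    intro w
    induction (reachable_iff_reflTransGen _ _).1 (hC.preconnected w₀ w) with
    | refl => exact fun v hv => hbranch w₀ v₀ v hv₀ hv
    | @tail w w' _ hadj ih =>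
      intro v hv
      obtain ⟨a, ha, b, hb, hab⟩ := hB.exists_adj hadj
      have hab' : (G.induce (⋃ w ∈ C, B w)).Adj ⟨a, hsub w ha⟩ ⟨b, hsub w' hb⟩ := hab
      exact ((ih a ha).trans hab'.reachable).trans (hbranch w' b v hb hv)
  refine (connected_iff_exists_forall_reachable _).2 ⟨⟨v₀, hsub w₀ hv₀⟩, fun ⟨v, hv⟩ => ?_⟩
  obtain ⟨w, hw, hvw⟩ := Set.mem_iUnion₂.1 hv
  exact hreach ⟨w, hw⟩ v hvw

lemma trans {C : U → Set W} (hC : IsMinorModel K H C) (hB : IsMinorModel H G B) :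
    IsMinorModel K G fun x => ⋃ w ∈ C x, B w where
  nonempty x := by
    obtain ⟨w, hw⟩ := hC.nonempty x
    exact (hB.nonempty w).mono (Set.subset_biUnion_of_mem hw)
  disjoint x y hxy := by
    refine Set.disjoint_iUnion₂_left.2 fun w hw => Set.disjoint_iUnion₂_right.2 fun w' hw' => ?_
    exact hB.disjoint w w' fun h => hxy (hC.eq_of_mem hw (h ▸ hw'))
  connected x := hB.connected_induce_biUnion (hC.connected x)
  exists_adj x y hxy := by
    obtain ⟨w, hw, w', hw', hadj⟩ := hC.exists_adj hxy
    obtain ⟨a, ha, b, hb, hab⟩ := hB.exists_adj hadj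
    exact ⟨a, Set.mem_biUnion hw ha, b, Set.mem_biUnion hw' hb, hab⟩

end IsMinorModel

lemma connected_induce_singleton (G : SimpleGraph V) (v : V) :
    (G.induce {v}).Connected :=
  { preconnected := Preconnected.of_subsingleton, nonempty := inferInstance }

lemma IsMinorOf.of_le {G' : SimpleGraph V} (h : G' ≤ G) : IsMinorOf G' G :=
  ⟨fun v => {v}, Set.singleton_nonempty, fun _ _ => Set.disjoint_singleton.2,
    connected_induce_singleton G, fun u w huw => ⟨u, rfl, w, rfl, h huw⟩⟩

lemma IsMinorOf.trans (hKH : IsMinorOf K H) (hHG : IsMinorOf H G) : IsMinorOf K G := by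
  rw [isMinorOf_iff_exists_isMinorModel] at *
  obtain ⟨C, hC⟩ := hKH
  obtain ⟨B, hB⟩ := hHG
  exact ⟨_, hC.trans hB⟩

lemma IsMinorOf.exists_injective (h : IsMinorOf H G) : ∃ f : W → V, Function.Injective f := by
  obtain ⟨B, hB⟩ := isMinorOf_iff_exists_isMinorModel.1 h
  choose f hf using hB.nonempty
  exact ⟨f, hB.injective_of_mem hf⟩

lemma IsMinorOf.finite [Finite V] (h : IsMinorOf H G) : Finite W :=
  h.exists_injective.elim fun f => Finite.of_injective f

lemma IsMinorOf.card_le [Finite V] (h : IsMinorOf H G) : Nat.card W ≤ Nat.card V :=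
  h.exists_injective.elim fun f => Nat.card_le_card_of_injective f

lemma IsMinorOf.exists_le_nonempty_iso [Finite V] (h : IsMinorOf H G)
    (hcard : Nat.card V ≤ Nat.card W) : ∃ G' ≤ G, Nonempty (H ≃g G') := by
  have hcard' := h.card_le.antisymm hcard
  obtain ⟨B, hB⟩ := isMinorOf_iff_exists_isMinorModel.1 h
  choose f hf using hB.nonempty
  have hbij : Function.Bijective f :=
    (Nat.bijective_iff_injective_and_card f).2 ⟨hB.injective_of_mem hf, hcard'⟩
  have hsing : ∀ w, ∀ v ∈ B w, v = f w := by
    intro w v hv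
    obtain ⟨u, rfl⟩ := hbij.2 v
    rw [hB.eq_of_mem (hf u) hv]
  refine ⟨H.map f, ?_, ⟨Iso.map (Equiv.ofBijective f hbij) H⟩⟩
  rintro _ _ ⟨-, u, w, huw, rfl, rfl⟩
  obtain ⟨a, ha, b, hb, hab⟩ := hB.exists_adj huw
  rwa [hsing u a ha, hsing w b hb] at hab

lemma not_memD_iff :
    ¬ MemD k G ↔ ∃ (W : Type) (_ : Finite W) (H : SimpleGraph W),
      IsMinorOf H G ∧ MinDegreeGT k H := by
  simp only [MemD, not_forall, not_le, lt_minDegC_iff_minDegreeGT, exists_prop]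
  exact ⟨fun ⟨W, _, H, h⟩ => ⟨W, inferInstance, H, h⟩,
    fun ⟨W, _, H, h⟩ => ⟨W, Fintype.ofFinite W, H, h⟩⟩

lemma MemDHat.nonempty_iso (hG : MemDHat k G) [Finite W] (hH : IsMinorOf H G)
    (hk : MinDegreeGT k H) : Nonempty (H ≃g G) := by
  by_contra hiso
  have := Fintype.ofFinite W
  exact not_memD_iff.2 ⟨W, inferInstance, H, .of_le le_rfl, hk⟩ (hG.2 W H ⟨hH, hiso⟩)

lemma MemDHat.finite (hG : MemDHat k G) : Finite V := by
  obtain ⟨W, _, H, hH, hk⟩ := not_memD_iff.1 hG.1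
  obtain ⟨e⟩ := hG.nonempty_iso hH hk
  exact Finite.of_equiv W e.toEquiv

lemma MemDHat.minDegreeGT (hG : MemDHat k G) : MinDegreeGT k G := by
  obtain ⟨W, _, H, hH, hk⟩ := not_memD_iff.1 hG.1
  obtain ⟨e⟩ := hG.nonempty_iso hH hk
  exact hk.of_iso e

lemma MemDHat.eq_of_le (hG : MemDHat k G) {G' : SimpleGraph V} (hle : G' ≤ G)
    (hk : MinDegreeGT k G') : G' = G := by
  have := hG.finite
  obtain ⟨e⟩ := hG.nonempty_iso (.of_le hle) hk
  have hcard : G.edgeSet.ncard ≤ G'.edgeSet.ncard := (Nat.card_congr e.mapEdgeSet).ge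
  exact edgeSet_inj.1 (Set.eq_of_subset_of_ncard_le (edgeSet_mono hle) hcard)

lemma MemDHat.card_le_card_of_isMinorOf (hG : MemDHat k G) (hH : IsMinorOf H G)
    (hk : MinDegreeGT k H) : Nat.card V ≤ Nat.card W := by
  have := hG.finite
  have := hH.finite
  obtain ⟨e⟩ := hG.nonempty_iso hH hk
  exact (Nat.card_congr e.toEquiv).ge

lemma memDHat_of_minimal [Finite V] (hk : MinDegreeGT k G)
    (hle : ∀ G' ≤ G, MinDegreeGT k G' → G' = G)
    (hcard : ∀ (W : Type) (H : SimpleGraph W), IsMinorOf H G → MinDegreeGT k H →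
      Nat.card V ≤ Nat.card W) : MemDHat k G := by
  refine ⟨not_memD_iff.2 ⟨V, inferInstance, G, .of_le le_rfl, hk⟩, ?_⟩
  rintro W _ H ⟨hH, hiso⟩
  by_contra hD
  obtain ⟨X, _, K, hKH, hK⟩ := not_memD_iff.1 hD
  have hVX : Nat.card V ≤ Nat.card X := hcard X K (hKH.trans hH) hK
  obtain ⟨H', hH', ⟨e⟩⟩ := hKH.exists_le_nonempty_iso (hH.card_le.trans hVX)
  obtain ⟨G', hG', ⟨f⟩⟩ := hH.exists_le_nonempty_iso (hVX.trans hKH.card_le)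
  obtain rfl := hle G' hG' (((hK.of_iso e).mono hH').of_iso f)
  exact hiso ⟨f⟩

end Minors

section MergedBranches

variable {V W : Type} {G : SimpleGraph V} {H : SimpleGraph W} {B : W → Set V}

/-- The vertices which are a branch set of their own. -/
def keptVertices (B : W → Set V) : Set V :=
  {v | ∃ w, B w = {v}}

/-- The indices of the branch sets with at least two vertices. -/
def mergedBranches (B : W → Set V) : Set W :=
  {w | (B w).Nontrivial}

namespace IsMinorModel

lemma subset_compl_keptVertices (hB : IsMinorModel H G B) {w : W} (hw : w ∈ mergedBranches B) :
    B w ⊆ (keptVertices B)ᶜ := by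
  rintro v hv ⟨u, hu⟩
  obtain rfl : u = w := hB.eq_of_mem (hu ▸ rfl) hv
  have hnt : (B u).Nontrivial := hw
  exact Set.not_nontrivial_singleton (hu ▸ hnt)

lemma exists_eq_singleton (hB : IsMinorModel H G B) {w : W} (hw : w ∉ mergedBranches B) :
    ∃ v, B w = {v} :=
  Set.exists_eq_singleton_iff_nonempty_subsingleton.2
    ⟨hB.nonempty w, Set.not_nontrivial_iff.1 hw⟩

variable [Finite V]

lemma ncard_mergedBranches_le (hB : IsMinorModel H G B) {Z : Set V}
    (hZ : ∀ w ∈ mergedBranches B, (B w ∩ Z).Nonempty) :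
    (mergedBranches B).ncard ≤ ((keptVertices B)ᶜ ∩ Z).ncard := by
  have hrep : ∀ w, ∃ v ∈ B w, w ∈ mergedBranches B → v ∈ Z := by
    intro w
    by_cases hw : w ∈ mergedBranches B
    · exact (hZ w hw).imp fun v hv => ⟨hv.1, fun _ => hv.2⟩
    · exact (hB.nonempty w).imp fun v hv => ⟨hv, fun h => absurd h hw⟩
  choose f hf hfZ using hrep
  exact Set.ncard_le_ncard_of_injOn f
    (fun w hw => ⟨hB.subset_compl_keptVertices hw (hf w), hfZ w hw⟩)
    (hB.injective_of_mem hf).injOn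

-- A transversal of the branch sets and its complement both meet every merged branch set.
lemma two_mul_ncard_mergedBranches_le (hB : IsMinorModel H G B) :
    2 * (mergedBranches B).ncard ≤ (keptVertices B)ᶜ.ncard := by
  choose f hf using hB.nonempty
  have hin := hB.ncard_mergedBranches_le (Z := Set.range f)
    fun w _ => ⟨f w, hf w, w, rfl⟩
  have hout : (mergedBranches B).ncard ≤ ((keptVertices B)ᶜ ∩ (Set.range f)ᶜ).ncard := by
    refine hB.ncard_mergedBranches_le fun w hw => ?_
    obtain ⟨v, hv, hne⟩ := hw.exists_ne (f w)
    refine ⟨v, hv, ?_⟩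
    rintro ⟨u, rfl⟩
    exact hne (congrArg f (hB.eq_of_mem (hf u) hv))
  rw [← Set.sdiff_eq] at hout
  have := Set.ncard_inter_add_ncard_sdiff_eq_ncard (keptVertices B)ᶜ (Set.range f)
  omega

lemma ncard_neighborSet_add_le (hB : IsMinorModel H G B) {w : W} {v : V} (hw : B w = {v}) :
    (H.neighborSet w).ncard + (G.neighborSet v \ keptVertices B).ncard ≤
      (mergedBranches B).ncard + (G.neighborSet v).ncard := by
  choose f hf using hB.nonempty
  have := Finite.of_injective f (hB.injective_of_mem hf)
  have hkept : (H.neighborSet w \ mergedBranches B).ncard ≤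
      (G.neighborSet v ∩ keptVertices B).ncard := by
    refine Set.ncard_le_ncard_of_injOn f ?_ (hB.injective_of_mem hf).injOn
    rintro u ⟨hu, hum⟩
    obtain ⟨x, hx⟩ := hB.exists_eq_singleton hum
    obtain ⟨a, ha, b, hb, hab⟩ := hB.exists_adj hu
    have hfu := hf u
    rw [hw, Set.mem_singleton_iff] at ha
    rw [hx, Set.mem_singleton_iff] at hb hfu
    subst ha hb hfu
    exact ⟨hab, u, hx⟩
  have hsplit := Set.ncard_le_ncard_sdiff_add_ncard (H.neighborSet w) (mergedBranches B)
  have := Set.ncard_inter_add_ncard_sdiff_eq_ncard (G.neighborSet v) (keptVertices B)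
  omega

lemma ncard_neighborSet_lt_of_keptVertices_eq_empty (hB : IsMinorModel H G B)
    (hkept : keptVertices B = ∅) (w : W) :
    (H.neighborSet w).ncard < (mergedBranches B).ncard := by
  choose f hf using hB.nonempty
  have := Finite.of_injective f (hB.injective_of_mem hf)
  have hall : mergedBranches B = Set.univ := by
    refine Set.eq_univ_of_forall fun u => ?_
    by_contra hu
    obtain ⟨v, hv⟩ := hB.exists_eq_singleton hu
    exact Set.notMem_empty v (hkept ▸ ⟨u, hv⟩)
  rw [hall]
  exact Set.ncard_lt_ncard (Set.ssubset_univ_iff.2 fun h => H.irrefl (h ▸ Set.mem_univ w :))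

lemma card_le_card_of_compl_keptVertices_eq_empty (hB : IsMinorModel H G B)
    (hkept : (keptVertices B)ᶜ = ∅) : Nat.card V ≤ Nat.card W := by
  choose f hf using hB.nonempty
  have := Finite.of_injective f (hB.injective_of_mem hf)
  have hall : ∀ v, ∃ w, B w = {v} := Set.eq_univ_iff_forall.1 (Set.compl_empty_iff.1 hkept)
  choose g hg using hall
  exact Nat.card_le_card_of_injective g fun u v huv =>
    Set.singleton_injective ((hg u).symm.trans (huv ▸ hg v))

end IsMinorModel

end MergedBranches

section Multipartite

variable {V ι : Type*}

/-- The complete multipartite graph on `V` whose colour classes are the fibres of `c`, some of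
which may be empty. -/
def multipartiteOf (c : V → ι) : SimpleGraph V :=
  (⊤ : SimpleGraph ι).comap c

@[simp]
lemma multipartiteOf_adj {c : V → ι} {u v : V} : (multipartiteOf c).Adj u v ↔ c u ≠ c v :=
  Iff.rfl

lemma eq_multipartiteOf_iff {G : SimpleGraph V} {c : V → ι} :
    G = multipartiteOf c ↔ ∀ u v, G.Adj u v ↔ c u ≠ c v :=
  ⟨fun h _ _ => h ▸ Iff.rfl, fun h => SimpleGraph.ext (funext₂ fun u v => propext (h u v))⟩

lemma neighborSet_multipartiteOf (c : V → ι) (v : V) :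
    (multipartiteOf c).neighborSet v = (c ⁻¹' {c v})ᶜ := by
  ext u
  exact ne_comm

lemma ncard_class_add_ncard_neighborSet [Finite V] (c : V → ι) (v : V) :
    (c ⁻¹' {c v}).ncard + ((multipartiteOf c).neighborSet v).ncard = Nat.card V := by
  rw [neighborSet_multipartiteOf, Set.ncard_add_ncard_compl]

lemma ncard_class_pos [Finite V] (c : V → ι) (v : V) : 0 < (c ⁻¹' {c v}).ncard :=
  (Set.ncard_pos (Set.toFinite _)).2 ⟨v, rfl⟩

lemma ncard_inter_class_add_add_le [Finite V] (c : V → ι) (s : Set V) {x y z : ι} (hxy : x ≠ y)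
    (hxz : x ≠ z) (hyz : y ≠ z) :
    (s ∩ c ⁻¹' {x}).ncard + (s ∩ c ⁻¹' {y}).ncard + (s ∩ c ⁻¹' {z}).ncard ≤ s.ncard := by
  have hdisj : ∀ {i j : ι}, i ≠ j → Disjoint (s ∩ c ⁻¹' {i}) (s ∩ c ⁻¹' {j}) := fun hij =>
    ((Set.disjoint_singleton.2 hij).preimage c).mono Set.inter_subset_right Set.inter_subset_right
  rw [← Set.ncard_union_eq (hdisj hxy),
    ← Set.ncard_union_eq (Set.disjoint_union_left.2 ⟨hdisj hxz, hdisj hyz⟩)]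
  exact Set.ncard_le_ncard (by simp)

/-- The colour classes of `c` have sizes `a, b, …, b` for some `a ≤ b`, and at least three of them
have size `b`. Only nonempty classes count, so every class is named by one of its vertices. -/
structure HasAlmostEqualClasses (c : V → ι) (b : ℕ) : Prop where
  ncard_le : ∀ v, (c ⁻¹' {c v}).ncard ≤ b
  ncard_eq_or : ∀ u v, c u ≠ c v → (c ⁻¹' {c u}).ncard = b ∨ (c ⁻¹' {c v}).ncard = b
  exists_three : ∃ x y z, c x ≠ c y ∧ c x ≠ c z ∧ c y ≠ c z ∧
    (c ⁻¹' {c x}).ncard = b ∧ (c ⁻¹' {c y}).ncard = b ∧ (c ⁻¹' {c z}).ncard = b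

end Multipartite

section MinorsOfMultipartite

variable {V W : Type} {ι : Type*} {c : V → ι} {H : SimpleGraph W} {B : W → Set V} {k b : ℕ}

namespace IsMinorModel

variable [Finite V]

lemma ncard_sdiff_class_add_ncard_class_le (hB : IsMinorModel H (multipartiteOf c) B)
    (hk : MinDegreeGT k H) (hcard : Nat.card V ≤ k + 1 + b) {v : V} (hv : v ∈ keptVertices B) :
    ((keptVertices B)ᶜ \ c ⁻¹' {c v}).ncard + (c ⁻¹' {c v}).ncard ≤
      (mergedBranches B).ncard + b := by
  obtain ⟨w, hw⟩ := hv
  have hdeg := hB.ncard_neighborSet_add_le hw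
  have hset : (multipartiteOf c).neighborSet v \ keptVertices B =
      (keptVertices B)ᶜ \ c ⁻¹' {c v} := by
    rw [neighborSet_multipartiteOf, Set.sdiff_eq, Set.sdiff_eq, Set.inter_comm]
  rw [hset] at hdeg
  have hdegH := hk.2 w
  have hdegG := ncard_class_add_ncard_neighborSet c v
  omega

lemma ncard_compl_keptVertices_lt (hB : IsMinorModel H (multipartiteOf c) B)
    (hk : MinDegreeGT k H) (hcard : Nat.card V ≤ k + 1 + b) :
    (keptVertices B)ᶜ.ncard < 2 * b := by
  have hmerged := hB.two_mul_ncard_mergedBranches_le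
  rcases (keptVertices B).eq_empty_or_nonempty with hempty | ⟨v, hv⟩
  · obtain ⟨w⟩ := hk.1
    have hdeg := hB.ncard_neighborSet_lt_of_keptVertices_eq_empty hempty w
    have hdegH := hk.2 w
    rw [hempty, Set.compl_empty, Set.ncard_univ] at hmerged ⊢
    omega
  · have hdeg := hB.ncard_sdiff_class_add_ncard_class_le hk hcard hv
    have hsplit := Set.ncard_inter_add_ncard_sdiff_eq_ncard (keptVertices B)ᶜ (c ⁻¹' {c v})
    have hlt : ((keptVertices B)ᶜ ∩ c ⁻¹' {c v}).ncard < (c ⁻¹' {c v}).ncard :=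
      Set.ncard_lt_ncard ((Set.ssubset_iff_of_subset Set.inter_subset_right).2
        ⟨v, rfl, fun h => h.1 hv⟩)
    omega

lemma ncard_compl_keptVertices_le_or (hB : IsMinorModel H (multipartiteOf c) B)
    (hk : MinDegreeGT k H) (hcard : Nat.card V ≤ k + 1 + b) {i : ι}
    (hi : (c ⁻¹' {i}).ncard = b) :
    (keptVertices B)ᶜ.ncard ≤ 2 * ((keptVertices B)ᶜ ∩ c ⁻¹' {i}).ncard ∨
      ((keptVertices B)ᶜ ∩ c ⁻¹' {i}).ncard = b := by
  by_cases hsub : c ⁻¹' {i} ⊆ (keptVertices B)ᶜ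
  · exact .inr (by rw [Set.inter_eq_right.2 hsub, hi])
  · obtain ⟨v, rfl, hv⟩ := Set.not_subset.1 hsub
    have hdeg := hB.ncard_sdiff_class_add_ncard_class_le hk hcard (not_not.1 hv)
    have hmerged := hB.two_mul_ncard_mergedBranches_le
    have hsplit := Set.ncard_inter_add_ncard_sdiff_eq_ncard (keptVertices B)ᶜ (c ⁻¹' {c v})
    omega

lemma compl_keptVertices_eq_empty (hB : IsMinorModel H (multipartiteOf c) B)
    (hk : MinDegreeGT k H) (hcard : Nat.card V ≤ k + 1 + b) {x y z : ι} (hxy : x ≠ y)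
    (hxz : x ≠ z) (hyz : y ≠ z) (hx : (c ⁻¹' {x}).ncard = b) (hy : (c ⁻¹' {y}).ncard = b)
    (hz : (c ⁻¹' {z}).ncard = b) : (keptVertices B)ᶜ = ∅ := by
  rw [← Set.ncard_eq_zero]
  have hlt := hB.ncard_compl_keptVertices_lt hk hcard
  have hsum := ncard_inter_class_add_add_le c (keptVertices B)ᶜ hxy hxz hyz
  -- At most one of the three classes lies outside the kept vertices; the other two then contain
  -- all non-kept vertices, so the third contains none of them and must satisfy the first bound.
  have hx' := hB.ncard_compl_keptVertices_le_or hk hcard hx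
  have hy' := hB.ncard_compl_keptVertices_le_or hk hcard hy
  have hz' := hB.ncard_compl_keptVertices_le_or hk hcard hz
  omega

end IsMinorModel

lemma MinDegreeGT.eq_of_le [Finite V] {G G' : SimpleGraph V} (hk : MinDegreeGT k G') (hle : G' ≤ G)
    (hG : ∀ u v, G.Adj u v → (G.neighborSet u).ncard ≤ k + 1 ∨ (G.neighborSet v).ncard ≤ k + 1) :
    G' = G := by
  have hsat : ∀ u v, G.Adj u v → (G.neighborSet u).ncard ≤ k + 1 → G'.Adj u v := by
    intro u v huv hu
    have heq : G'.neighborSet u = G.neighborSet u :=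
      Set.eq_of_subset_of_ncard_le (fun _ h => hle h) (hu.trans (hk.2 u))
    exact (heq ▸ huv : v ∈ G'.neighborSet u)
  refine hle.antisymm fun u v huv => ?_
  rcases hG u v huv with hu | hv
  · exact hsat u v huv hu
  · exact (hsat v u huv.symm hv).symm

lemma HasAlmostEqualClasses.memDHat (hc : HasAlmostEqualClasses c b)
    (hcard : Nat.card V = k + 1 + b) : MemDHat k (multipartiteOf c) := by
  have : Finite V := Nat.finite_of_card_ne_zero (by omega)
  obtain ⟨x, y, z, hxy, hxz, hyz, hx, hy, hz⟩ := hc.exists_three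
  refine memDHat_of_minimal ⟨⟨x⟩, fun v => ?_⟩ (fun G' hle hk => hk.eq_of_le hle fun u v huv => ?_)
    fun W H hH hk => ?_
  · have := ncard_class_add_ncard_neighborSet c v
    have := hc.ncard_le v
    omega
  · have := ncard_class_add_ncard_neighborSet c u
    have := ncard_class_add_ncard_neighborSet c v
    have := hc.ncard_eq_or u v huv
    omega
  · obtain ⟨B, hB⟩ := isMinorOf_iff_exists_isMinorModel.1 hH
    exact hB.card_le_card_of_compl_keptVertices_eq_empty
      (hB.compl_keptVertices_eq_empty hk hcard.le hxy hxz hyz hx hy hz)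

end MinorsOfMultipartite

section EdgeDeletion

variable {V : Type} {G : SimpleGraph V} {k : ℕ}

lemma neighborSet_deleteEdges_pair_left (G : SimpleGraph V) {u v : V} (huv : u ≠ v) :
    (G.deleteEdges {s(u, v)}).neighborSet u = G.neighborSet u \ {v} := by
  ext x
  simp [deleteEdges_adj, huv]

lemma neighborSet_deleteEdges_pair_of_ne (G : SimpleGraph V) {u v w : V} (hu : w ≠ u)
    (hv : w ≠ v) : (G.deleteEdges {s(u, v)}).neighborSet w = G.neighborSet w := by
  ext x
  simp [deleteEdges_adj, hu, hv]

lemma MinDegreeGT.deleteEdges_pair (hk : MinDegreeGT k G) {u v : V} (huv : u ≠ v)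
    (hu : k + 1 < (G.neighborSet u).ncard) (hv : k + 1 < (G.neighborSet v).ncard) :
    MinDegreeGT k (G.deleteEdges {s(u, v)}) := by
  refine ⟨hk.1, fun w => ?_⟩
  by_cases hwu : w = u
  · have := Set.pred_ncard_le_ncard_sdiff_singleton (G.neighborSet u) v
    rw [hwu, neighborSet_deleteEdges_pair_left G huv]
    omega
  by_cases hwv : w = v
  · have := Set.pred_ncard_le_ncard_sdiff_singleton (G.neighborSet v) u
    rw [hwv, Sym2.eq_swap, neighborSet_deleteEdges_pair_left G huv.symm]
    omega
  · rw [neighborSet_deleteEdges_pair_of_ne G hwu hwv]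
    exact hk.2 w

lemma MemDHat.ncard_neighborSet_le_or (hG : MemDHat k G) {u v : V} (huv : G.Adj u v) :
    (G.neighborSet u).ncard ≤ k + 1 ∨ (G.neighborSet v).ncard ≤ k + 1 := by
  by_contra! hdeg
  have heq : G.deleteEdges {s(u, v)} = G :=
    hG.eq_of_le (deleteEdges_le _) (hG.minDegreeGT.deleteEdges_pair huv.ne hdeg.1 hdeg.2)
  rw [← heq, deleteEdges_adj] at huv
  exact huv.2 rfl

end EdgeDeletion

section EdgeContraction

variable {V : Type} {ι : Type*} {c : V → ι} {k : ℕ}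

open Classical in
/-- Contracting an edge `xy` of `multipartiteOf c` makes `x` a dominating vertex; the result is
the complete multipartite graph of this colouring, where `none` is the new colour of `x`. -/
noncomputable def contractedColoring (c : V → ι) (x y : V) : {v // v ≠ y} → Option ι :=
  fun v => if v.1 = x then none else some (c v)

lemma isMinorOf_contractedColoring {x y : V} (hxy : c x ≠ c y) :
    IsMinorOf (multipartiteOf (contractedColoring c x y)) (multipartiteOf c) := by
  classical
  have hbranch : ∀ u : {v // v ≠ y},
      ((multipartiteOf c).induce (if u.1 = x then {x, y} else {u.1})).Connected := by
    intro u
    by_cases hu : u.1 = x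
    · rw [if_pos hu]
      exact induce_pair_connected_of_adj (multipartiteOf_adj.2 hxy)
    · rw [if_neg hu]
      exact connected_induce_singleton _ _
  have hdom : ∀ v, ∃ a ∈ ({x, y} : Set V), c a ≠ c v := by
    intro v
    by_cases hx : c x = c v
    · exact ⟨y, by simp, fun hy => hxy (hx.trans hy.symm)⟩
    · exact ⟨x, by simp, hx⟩
  refine ⟨fun u => if u.1 = x then {x, y} else {u.1}, fun u => (hbranch u).nonempty.elim
    fun v => ⟨v, v.2⟩, ?_, hbranch, ?_⟩
  · rintro ⟨u, hu⟩ ⟨w, hw⟩ huw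
    rw [Ne, Subtype.mk.injEq] at huw
    dsimp only
    split_ifs with hux hwx hwx <;> simp_all [eq_comm]
  · rintro u w huw
    by_cases hux : u.1 = x <;> by_cases hwx : w.1 = x <;>
      simp only [multipartiteOf_adj, contractedColoring, hux, hwx, if_true, if_false] at huw ⊢
    · exact absurd rfl huw
    · obtain ⟨a, ha, haw⟩ := hdom w
      exact ⟨a, ha, w, rfl, haw⟩
    · obtain ⟨a, ha, hau⟩ := hdom u
      exact ⟨u, rfl, a, ha, hau.symm⟩
    · exact ⟨u, rfl, w, rfl, fun h => huw (congrArg some h)⟩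

lemma ncard_class_contractedColoring_self {x y : V} (hxy : x ≠ y) :
    (contractedColoring c x y ⁻¹' {contractedColoring c x y ⟨x, hxy⟩}).ncard = 1 := by
  refine Set.ncard_eq_one.2 ⟨⟨x, hxy⟩, Set.ext fun u => ?_⟩
  simp [contractedColoring, Subtype.ext_iff]

lemma ncard_class_contractedColoring_le [Finite V] {x y : V} {w : {v // v ≠ y}} (hwx : w.1 ≠ x) :
    (contractedColoring c x y ⁻¹' {contractedColoring c x y w}).ncard ≤
      (c ⁻¹' {c w} \ {x, y}).ncard := by
  refine Set.ncard_le_ncard_of_injOn Subtype.val ?_ Subtype.val_injective.injOn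
  rintro u hu
  have hux : u.1 ≠ x := fun h => by simp [contractedColoring, h, hwx] at hu
  have huw : c u = c w := by simpa [contractedColoring, hux, hwx] using hu
  simp [huw, hux, u.2]

lemma MinDegreeGT.multipartiteOf_contractedColoring [Finite V]
    (hk : MinDegreeGT k (multipartiteOf c)) {x y : V} (hxy : c x ≠ c y) (hcard : k + 2 < Nat.card V)
    (hdeg : ∀ w, c w ≠ c x → c w ≠ c y → k + 1 < ((multipartiteOf c).neighborSet w).ncard) :
    MinDegreeGT k (multipartiteOf (contractedColoring c x y)) := by
  have hne : x ≠ y := fun h => hxy (congrArg c h)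
  have hcard' : Nat.card {v // v ≠ y} + 1 = Nat.card V := by
    have := Set.ncard_add_ncard_compl {y}
    rw [Set.ncard_singleton] at this
    exact (add_comm _ _).trans this
  refine ⟨⟨⟨x, hne⟩⟩, fun w => ?_⟩
  have hw := ncard_class_add_ncard_neighborSet (contractedColoring c x y) w
  by_cases hwx : w.1 = x
  · obtain rfl : w = ⟨x, hne⟩ := Subtype.ext hwx
    rw [ncard_class_contractedColoring_self] at hw
    omega
  have hle := ncard_class_contractedColoring_le (c := c) hwx
  have hdegG := ncard_class_add_ncard_neighborSet c w.1
  have hdegk := hk.2 w.1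
  by_cases hcol : c w = c x ∨ c w = c y
  · have hlt : (c ⁻¹' {c w} \ {x, y}).ncard < (c ⁻¹' {c w}).ncard := by
      refine Set.ncard_lt_ncard (Set.sdiff_ssubset_left_iff.2 ?_)
      rcases hcol with h | h
      · exact ⟨x, h.symm, by simp⟩
      · exact ⟨y, h.symm, by simp⟩
    omega
  · rw [not_or] at hcol
    have hlt := hdeg w hcol.1 hcol.2
    have := Set.ncard_le_ncard (Set.sdiff_subset : c ⁻¹' {c w} \ {x, y} ⊆ c ⁻¹' {c w})
    omega

lemma MemDHat.exists_third_class (hk : 1 ≤ k) (hG : MemDHat k (multipartiteOf c)) {x y : V}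
    (hxy : c x ≠ c y) :
    ∃ w, c w ≠ c x ∧ c w ≠ c y ∧ ((multipartiteOf c).neighborSet w).ncard ≤ k + 1 := by
  have := hG.finite
  by_contra! hdeg
  rcases lt_or_ge (k + 2) (Nat.card V) with hcard | hcard
  · have hle := hG.card_le_card_of_isMinorOf (isMinorOf_contractedColoring hxy)
      (hG.minDegreeGT.multipartiteOf_contractedColoring hxy hcard hdeg)
    exact (Finite.card_subtype_lt (p := (· ≠ y)) (x := y) (by simp)).not_ge hle
  · have hclass := ncard_class_add_ncard_neighborSet c
    have hdegk := hG.minDegreeGT.2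
    have hunion : (c ⁻¹' {c x} ∪ c ⁻¹' {c y}).ncard < (Set.univ : Set V).ncard := by
      have := Set.ncard_union_le (c ⁻¹' {c x}) (c ⁻¹' {c y})
      have := hclass x
      have := hdegk x
      have := hclass y
      have := hdegk y
      rw [Set.ncard_univ]
      omega
    obtain ⟨w, -, hw⟩ := Set.exists_mem_notMem_of_ncard_lt_ncard hunion
    rw [Set.mem_union, not_or] at hw
    have := hdeg w hw.1 hw.2
    have := hclass w
    have := ncard_class_pos c w
    omega

lemma MemDHat.exists_three_classes (hk : 1 ≤ k) (hG : MemDHat k (multipartiteOf c)) :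
    ∃ x y z, c x ≠ c y ∧ c x ≠ c z ∧ c y ≠ c z ∧
      ((multipartiteOf c).neighborSet x).ncard ≤ k + 1 ∧
      ((multipartiteOf c).neighborSet y).ncard ≤ k + 1 ∧
      ((multipartiteOf c).neighborSet z).ncard ≤ k + 1 := by
  obtain ⟨⟨u⟩, hdeg⟩ := hG.minDegreeGT
  obtain ⟨v, huv⟩ : ((multipartiteOf c).neighborSet u).Nonempty :=
    Set.nonempty_of_ncard_ne_zero (Nat.ne_zero_of_lt (hdeg u))
  obtain ⟨x, w, hxw, hx⟩ :
      ∃ x w, c x ≠ c w ∧ ((multipartiteOf c).neighborSet x).ncard ≤ k + 1 := by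
    rcases hG.ncard_neighborSet_le_or huv with hu | hv
    · exact ⟨u, v, huv, hu⟩
    · exact ⟨v, u, Ne.symm huv, hv⟩
  obtain ⟨y, hyx, -, hy⟩ := hG.exists_third_class hk hxw
  obtain ⟨z, hzx, hzy, hz⟩ := hG.exists_third_class hk hyx.symm
  exact ⟨x, y, z, hyx.symm, hzx.symm, hzy.symm, hx, hy, hz⟩

lemma MemDHat.exists_hasAlmostEqualClasses (hk : 1 ≤ k) (hG : MemDHat k (multipartiteOf c)) :
    ∃ b, Nat.card V = k + 1 + b ∧ HasAlmostEqualClasses c b := by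
  have := hG.finite
  have hdeg := hG.minDegreeGT.2
  have hclass := ncard_class_add_ncard_neighborSet c
  obtain ⟨x, y, z, hxy, hxz, hyz, hx, hy, hz⟩ := hG.exists_three_classes hk
  obtain ⟨b, hb⟩ : ∃ b, Nat.card V = k + 1 + b := by
    refine Nat.exists_eq_add_of_le ?_
    have := hclass x
    have := hdeg x
    omega
  have hle : ∀ v, (c ⁻¹' {c v}).ncard ≤ b := fun v => by
    have := hclass v
    have := hdeg v
    omega
  have heq : ∀ v, ((multipartiteOf c).neighborSet v).ncard ≤ k + 1 →
      (c ⁻¹' {c v}).ncard = b := fun v hv => by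
    have := hclass v
    have := hdeg v
    omega
  exact ⟨b, hb, hle, fun u v huv => (hG.ncard_neighborSet_le_or huv).imp (heq u) (heq v),
    x, y, z, hxy, hxz, hyz, heq x hx, heq y hy, heq z hz⟩

lemma memDHat_multipartiteOf_iff (hk : 1 ≤ k) :
    MemDHat k (multipartiteOf c) ↔ ∃ b, Nat.card V = k + 1 + b ∧ HasAlmostEqualClasses c b :=
  ⟨fun h => h.exists_hasAlmostEqualClasses hk, fun ⟨_, hcard, hc⟩ => hc.memDHat hcard⟩

end EdgeContraction

section ClassSizes

variable {V ι : Type*} {a b p : ℕ}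

/-- The colour classes of `d` are those of the complete `(p + 1)`-partite graph `K_{a,b,…,b}`,
with colour `0` as the class of size `a`. -/
structure HasClassSizes (d : V → Fin (p + 1)) (a b : ℕ) : Prop where
  ncard_zero : (d ⁻¹' {0}).ncard = a
  ncard_of_ne : ∀ i, i ≠ 0 → (d ⁻¹' {i}).ncard = b

namespace HasClassSizes

variable {d : V → Fin (p + 1)}

lemma finite (hd : HasClassSizes d a b) (ha : 0 < a) (hb : 0 < b) : Finite V := by
  have hfib : ∀ i, (d ⁻¹' {i}).Finite := fun i => by
    rcases eq_or_ne i 0 with rfl | hi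
    · exact Set.finite_of_ncard_pos (hd.ncard_zero ▸ ha)
    · exact Set.finite_of_ncard_pos (hd.ncard_of_ne i hi ▸ hb)
  exact Set.finite_univ_iff.1 (Set.Finite.of_finite_fibers d (Set.toFinite _)
    fun i _ => (hfib i).subset Set.inter_subset_right)

lemma card_eq [Finite V] (hd : HasClassSizes d a b) : Nat.card V = a + p * b := by
  calc Nat.card V = ∑ i, (d ⁻¹' {i}).ncard := by
        rw [← Nat.card_congr (Equiv.sigmaFiberEquiv d), Nat.card_sigma]
        rfl
    _ = a + p * b := by
        rw [Fin.sum_univ_succ, hd.ncard_zero,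
          Finset.sum_congr rfl fun i _ => hd.ncard_of_ne _ (Fin.succ_ne_zero i)]
        simp

lemma hasAlmostEqualClasses (hd : HasClassSizes d a b) (hb : 0 < b) (hab : a ≤ b) (hp : 2 ≤ p)
    (hpab : p = 2 → a = b) : HasAlmostEqualClasses d b := by
  refine ⟨fun v => ?_, fun u v huv => ?_, ?_⟩
  · rcases eq_or_ne (d v) 0 with hv | hv
    · rw [hv, hd.ncard_zero]
      exact hab
    · exact (hd.ncard_of_ne _ hv).le
  · by_cases hu : d u = 0
    · exact .inr (hd.ncard_of_ne _ fun hv => huv (hu.trans hv.symm))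
    · exact .inl (hd.ncard_of_ne _ hu)
  · have hlast : ∀ i : Fin (p + 1), p ≤ i + 2 → ∃ v, d v = i ∧ (d ⁻¹' {d v}).ncard = b := by
      intro i hi
      have hsize : (d ⁻¹' {i}).ncard = b := by
        rcases eq_or_ne i 0 with rfl | h
        · rw [hd.ncard_zero]
          exact hpab (hp.antisymm' hi)
        · exact hd.ncard_of_ne i h
      obtain ⟨v, rfl⟩ := Set.nonempty_of_ncard_ne_zero (hsize ▸ hb.ne')
      exact ⟨v, rfl, hsize⟩
    obtain ⟨x, hx, hxb⟩ := hlast ⟨p, by omega⟩ (by grind)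
    obtain ⟨y, hy, hyb⟩ := hlast ⟨p - 1, by omega⟩ (by grind)
    obtain ⟨z, hz, hzb⟩ := hlast ⟨p - 2, by omega⟩ (by grind)
    exact ⟨x, y, z, by grind, by grind, by grind, hxb, hyb, hzb⟩

end HasClassSizes

lemma exists_surjective_fin_coloring [Finite V] (c : V → ι) (v₀ : V) :
    ∃ (p : ℕ) (d : V → Fin (p + 1)), Function.Surjective d ∧ d v₀ = 0 ∧
      ∀ u v, d u = d v ↔ c u = c v := by
  have : Nonempty (Set.range c) := ⟨⟨c v₀, v₀, rfl⟩⟩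
  obtain ⟨p, hp⟩ := Nat.exists_eq_succ_of_ne_zero (Nat.card_pos (α := Set.range c)).ne'
  let e := Finite.equivFinOfCardEq hp
  let e' := e.trans (Equiv.swap (e (Set.rangeFactorization c v₀)) 0)
  refine ⟨p, e' ∘ Set.rangeFactorization c,
    e'.surjective.comp Set.rangeFactorization_surjective, ?_, fun u v => ?_⟩
  · simp [e']
  · simp [Set.rangeFactorization, Subtype.ext_iff]

namespace HasAlmostEqualClasses

lemma congr {κ : Type*} {c : V → ι} {d : V → κ} (h : ∀ u v, d u = d v ↔ c u = c v)
    (hc : HasAlmostEqualClasses c b) : HasAlmostEqualClasses d b := by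
  have hclass : ∀ v, d ⁻¹' {d v} = c ⁻¹' {c v} := fun v => Set.ext fun u => h u v
  obtain ⟨hle, hor, hthree⟩ := hc
  simp only [← hclass, ne_eq, ← h] at hle hor hthree
  exact ⟨hle, hor, hthree⟩

lemma hasClassSizes {d : V → Fin (p + 1)} (hd : HasAlmostEqualClasses d b)
    (hsurj : Function.Surjective d) (hmin : ∀ i, (d ⁻¹' {0}).ncard ≤ (d ⁻¹' {i}).ncard) :
    HasClassSizes d (d ⁻¹' {0}).ncard b := by
  refine ⟨rfl, fun i hi => ?_⟩
  obtain ⟨v₀, hv₀⟩ := hsurj 0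
  obtain ⟨v, rfl⟩ := hsurj i
  have hor := hd.ncard_eq_or v v₀ (hv₀ ▸ hi)
  have hle := hd.ncard_le v
  have := hmin (d v)
  rw [hv₀] at hor
  omega

lemma two_le {d : V → Fin (p + 1)} (hd : HasAlmostEqualClasses d b) : 2 ≤ p := by
  obtain ⟨x, y, z, hxy, hxz, hyz, -⟩ := hd.exists_three
  omega

lemma ncard_zero_eq {d : V → Fin 3} (hd : HasAlmostEqualClasses d b) :
    (d ⁻¹' {0}).ncard = b := by
  obtain ⟨x, y, z, hxy, hxz, hyz, hx, hy, hz⟩ := hd.exists_three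
  have hzero : d x = 0 ∨ d y = 0 ∨ d z = 0 := by omega
  rcases hzero with h | h | h
  · rwa [h] at hx
  · rwa [h] at hy
  · rwa [h] at hz

lemma exists_hasClassSizes [Finite V] {c : V → ι} (hc : HasAlmostEqualClasses c b) :
    ∃ (a p : ℕ) (d : V → Fin (p + 1)), 0 < a ∧ a ≤ b ∧ 2 ≤ p ∧ (p = 2 → a = b) ∧
      (∀ u v, d u = d v ↔ c u = c v) ∧ HasClassSizes d a b := by
  have : Nonempty V := hc.exists_three.nonempty
  obtain ⟨v₀, hmin⟩ := Finite.exists_min fun v => (c ⁻¹' {c v}).ncard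
  obtain ⟨p, d, hsurj, hv₀, hd⟩ := exists_surjective_fin_coloring c v₀
  have hclass : ∀ v, d ⁻¹' {d v} = c ⁻¹' {c v} := fun v => Set.ext fun u => hd u v
  have hdb := hc.congr hd
  refine ⟨_, p, d, hv₀ ▸ ncard_class_pos d v₀, hv₀ ▸ hdb.ncard_le v₀, hdb.two_le, ?_, hd,
    hdb.hasClassSizes hsurj (hsurj.forall.2 fun v => ?_)⟩
  · rintro rfl
    exact hdb.ncard_zero_eq
  · rw [← hv₀, hclass, hclass]
    exact hmin v

end HasAlmostEqualClasses

end ClassSizes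

theorem completeMultipartite_memDHat_iff_general (k : ℕ) (hk : 1 ≤ k)
    {V : Type} (G : SimpleGraph V) (hG : IsCompleteMultipartiteGraph G) :
    MemDHat k G ↔
      ∃ a b p : ℕ, 1 ≤ a ∧ a ≤ b ∧ 2 ≤ p ∧
        k + 1 = a + (p - 1) * b ∧
        (p = 2 → a = b) ∧
        ∃ c : V → Fin (p + 1),
          (∀ u v : V, G.Adj u v ↔ c u ≠ c v) ∧
          {v : V | c v = 0}.ncard = a ∧
          (∀ i : Fin (p + 1), i ≠ 0 → {v : V | c v = i}.ncard = b) := by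
  have hmul : ∀ {b p : ℕ}, 2 ≤ p → (p - 1) * b + b = p * b := fun {b p} hp => by
    rw [← Nat.succ_mul, Nat.succ_eq_add_one, Nat.sub_add_cancel (by omega)]
  constructor
  · intro h
    obtain ⟨ι, c, hc⟩ := hG
    have := h.finite
    rw [eq_multipartiteOf_iff.2 hc, memDHat_multipartiteOf_iff hk] at h
    obtain ⟨b, hcard, hb⟩ := h
    obtain ⟨a, p, d, ha, hab, hp, hpab, hd, hsizes⟩ := hb.exists_hasClassSizes
    rw [hsizes.card_eq, ← hmul hp] at hcard
    exact ⟨a, b, p, ha, hab, hp, by omega, hpab, d, fun u v => (hc u v).trans (hd u v).not.symm,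
      hsizes.ncard_zero, hsizes.ncard_of_ne⟩
  · rintro ⟨a, b, p, ha, hab, hp, hkab, hpab, d, hd, hzero, hne⟩
    have hsizes : HasClassSizes d a b := ⟨hzero, hne⟩
    have := hsizes.finite ha (ha.trans hab)
    have hcard := hsizes.card_eq
    rw [← hmul hp] at hcard
    rw [eq_multipartiteOf_iff.2 hd, memDHat_multipartiteOf_iff hk]
    exact ⟨b, by omega, hsizes.hasAlmostEqualClasses (ha.trans hab) hab hp hpab⟩

/-- Theorem 8.1 / Theorem 1.4: for `k ≥ 1`, a complete multipartite graph `G`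
is in `D̂_k` iff for some `b ≥ a ≥ 1` and `p ≥ 2`, `G` is isomorphic to the
complete `(p+1)`-partite graph `K_{a,b,…,b}` with one colour class of size `a`
and `p` colour classes of size `b`, where `k + 1 = a + (p-1)b`, and if `p = 2`
then `a = b`. -/
theorem completeMultipartite_memDHat_iff (k : ℕ) (hk : 1 ≤ k)
    {V : Type} [Fintype V] (G : SimpleGraph V)
    (hG : IsCompleteMultipartiteGraph G) :
    MemDHat k G ↔
      ∃ a b p : ℕ, 1 ≤ a ∧ a ≤ b ∧ 2 ≤ p ∧
        k + 1 = a + (p - 1) * b ∧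
        (p = 2 → a = b) ∧
        ∃ c : V → Fin (p + 1),
          (∀ u v : V, G.Adj u v ↔ c u ≠ c v) ∧
          {v : V | c v = 0}.ncard = a ∧
          (∀ i : Fin (p + 1), i ≠ 0 → {v : V | c v = i}.ncard = b) :=
  completeMultipartite_memDHat_iff_general k hk G hG
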